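/- arXiv:1504.04107 — 3 statements merged into one kernel-verified Lean document; each statement's English description precedes it below -/
import Mathlib

section
/- Let Δ₁ > Δ₂ > 1 be real numbers, let P(x) = Δ₁Δ₂ x³ − (Δ₁Δ₂ + Δ₁ + Δ₂) x² + 2(Δ₁ + Δ₂ + 1) x − 6, and for ρ ∈ ℝ let A(ρ) be the 3×3 real matrix with rows (ρ−2, ρ−1, ρ−3), (ρΔ₁² − 2Δ₁, ρΔ₁ − 1, ρΔ₁³ − 3Δ₁²), and (ρΔ₂² − 2Δ₂, ρΔ₂ − 1, ρΔ₂³ − 3Δ₂²). If there exists a triplet (r, a, b) ∈ ℝ³ such that A(r)·(a, b, 1)ᵀ = 0 and a² − 4b < 0, then condition (C) holds (i.e. Δ₂² − (Δ₁ + 1)Δ₂ + 3Δ₁ > 0 or Δ₁ < 5 + 2√6) and P(r) = 0. -/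
/-!
Put `q(t) = t(t² + at + b)`. The row of `A(r)` attached to the node `t ∈ {1, Δ₁, Δ₂}`, applied to
`(a, b, 1)ᵀ`, is `r q(t) - q'(t)`, so the null vector equation says that `r q - q'` vanishes at
three distinct nodes `x, y, z`; having leading coefficient `r`, it equals `r (t - x)(t - y)(t - z)`.
Eliminating `a` and `b` from the comparison of coefficients yields the cubic equation for `r`.
Differentiating the identity at `t = z`, multiplying by `q(z)` and using `q'(z) = r q(z)` yields
`r q(z) (z² - (x + y)z + 3xy) = 2N² + (z² - b)²` with `N = z² + az + b`. A negative discriminant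
makes `N` and `b = rxyz` positive, so `z² - (x + y)z + 3xy` has the sign of `xy`; at the nodes
`1, Δ₁, Δ₂` this is the first alternative of condition (C).
-/

open Matrix

section CommRing

variable {R : Type*} [CommRing R]

theorem cubic_coeffs_eq_of_three_roots [IsDomain R] {c₃ c₂ c₁ c₀ x y z : R}
    (hxy : x ≠ y) (hxz : x ≠ z) (hyz : y ≠ z)
    (hx : c₃ * x ^ 3 + c₂ * x ^ 2 + c₁ * x + c₀ = 0)
    (hy : c₃ * y ^ 3 + c₂ * y ^ 2 + c₁ * y + c₀ = 0)
    (hz : c₃ * z ^ 3 + c₂ * z ^ 2 + c₁ * z + c₀ = 0) :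
    c₂ = -c₃ * (x + y + z) ∧ c₁ = c₃ * (x * y + x * z + y * z) ∧ c₀ = -c₃ * (x * y * z) := by
  have divided_diff_xy : c₃ * (x ^ 2 + x * y + y ^ 2) + c₂ * (x + y) + c₁ = 0 :=
    mul_left_cancel₀ (sub_ne_zero.mpr hxy) (by linear_combination hx - hy)
  have divided_diff_xz : c₃ * (x ^ 2 + x * z + z ^ 2) + c₂ * (x + z) + c₁ = 0 :=
    mul_left_cancel₀ (sub_ne_zero.mpr hxz) (by linear_combination hx - hz)
  have h₂ : c₂ = -c₃ * (x + y + z) :=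
    mul_left_cancel₀ (sub_ne_zero.mpr hyz) (by linear_combination divided_diff_xy - divided_diff_xz)
  have h₁ : c₁ = c₃ * (x * y + x * z + y * z) := by
    linear_combination divided_diff_xy - (x + y) * h₂
  exact ⟨h₂, h₁, by linear_combination hx - x ^ 2 * h₂ - x * h₁⟩

/-- The matrix `A(ρ)` for an arbitrary family of nodes; the paper's nodes are `1, Δ₁, Δ₂`.
The columns are ordered so that `A(ρ)` acts on `(a, b, 1)ᵀ`. -/
def nodeMatrix {ι : Type*} (node : ι → R) (ρ : R) : Matrix ι (Fin 3) R :=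
  of fun i => ![ρ * node i ^ 2 - 2 * node i, ρ * node i - 1, ρ * node i ^ 3 - 3 * node i ^ 2]

/-- The cubic `P` for arbitrary nodes `x, y, z`, with the elementary symmetric polynomials of the
nodes in its coefficients; the paper's `P` has nodes `1, Δ₁, Δ₂`. -/
def nodeCubic (x y z ρ : R) : R :=
  x * y * z * ρ ^ 3 - (x * y + x * z + y * z) * ρ ^ 2 + 2 * (x + y + z) * ρ - 6

theorem nodeMatrix_mulVec_apply {ι : Type*} (node : ι → R) (r a b : R) (i : ι) :
    (nodeMatrix node r *ᵥ ![a, b, 1]) i =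
      r * node i ^ 3 + (r * a - 3) * node i ^ 2 + (r * b - 2 * a) * node i + -b := by
  simp only [nodeMatrix, mulVec, dotProduct, Fin.sum_univ_three, of_apply, cons_val]
  ring

theorem nodeMatrix_one (y z ρ : R) :
    nodeMatrix ![1, y, z] ρ =
      !![ρ - 2, ρ - 1, ρ - 3;
         ρ * y ^ 2 - 2 * y, ρ * y - 1, ρ * y ^ 3 - 3 * y ^ 2;
         ρ * z ^ 2 - 2 * z, ρ * z - 1, ρ * z ^ 3 - 3 * z ^ 2] := by
  ext i j
  fin_cases i <;> fin_cases j <;> simp [nodeMatrix]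

theorem nodeCubic_one (y z ρ : R) :
    nodeCubic 1 y z ρ =
      y * z * ρ ^ 3 - (y * z + y + z) * ρ ^ 2 + 2 * (y + z + 1) * ρ - 6 := by
  unfold nodeCubic
  ring

theorem coeff_relations_of_nodeMatrix_mulVec_eq_zero [IsDomain R] {x y z r a b : R}
    (hxy : x ≠ y) (hxz : x ≠ z) (hyz : y ≠ z)
    (hnull : nodeMatrix ![x, y, z] r *ᵥ ![a, b, 1] = 0) :
    r * a - 3 = -r * (x + y + z) ∧ r * b - 2 * a = r * (x * y + x * z + y * z) ∧
      b = r * (x * y * z) := by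
  have root (i : Fin 3) := (nodeMatrix_mulVec_apply ![x, y, z] r a b i).symm.trans
    (congrFun hnull i)
  obtain ⟨h₂, h₁, h₀⟩ := cubic_coeffs_eq_of_three_roots hxy hxz hyz (root 0) (root 1) (root 2)
  exact ⟨h₂, h₁, by linear_combination -h₀⟩

theorem nodeCubic_eq_zero_of_coeff_relations {x y z r a b : R}
    (h₂ : r * a - 3 = -r * (x + y + z))
    (h₁ : r * b - 2 * a = r * (x * y + x * z + y * z))
    (h₀ : b = r * (x * y * z)) :
    nodeCubic x y z r = 0 := by
  unfold nodeCubic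
  linear_combination r * h₁ + 2 * h₂ - r ^ 2 * h₀

theorem sum_sq_eq_of_coeff_relations {x y z r a b : R}
    (h₂ : r * a - 3 = -r * (x + y + z))
    (h₁ : r * b - 2 * a = r * (x * y + x * z + y * z))
    (h₀ : b = r * (x * y * z)) :
    (z ^ 2 + a * z + b) * (r * z * (z ^ 2 - (x + y) * z + 3 * (x * y))) =
      2 * (z ^ 2 + a * z + b) ^ 2 + (z ^ 2 - b) ^ 2 := by
  have log_deriv : r * (z * (z ^ 2 + a * z + b)) = 3 * z ^ 2 + 2 * a * z + b := by
    linear_combination z ^ 2 * h₂ + z * h₁ - h₀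
  have deriv_at_root : r * z * (z ^ 2 - (x + y) * z + 3 * (x * y)) =
      r * z ^ 2 * (2 * z + a) - 3 * z ^ 2 + 3 * b := by
    linear_combination -z ^ 2 * h₂ - 3 * h₀
  linear_combination (z ^ 2 + a * z + b) * deriv_at_root + z * (2 * z + a) * log_deriv

end CommRing

section LinearOrder

variable {R : Type*} [CommRing R] [LinearOrder R] [IsStrictOrderedRing R]

theorem monic_quadratic_pos_of_discrim_neg {a b : R} (hdisc : a ^ 2 - 4 * b < 0) (t : R) :
    0 < t ^ 2 + a * t + b := by
  have complete_square : 4 * (t ^ 2 + a * t + b) = (2 * t + a) ^ 2 - (a ^ 2 - 4 * b) := by ring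
  linarith only [complete_square, hdisc, sq_nonneg (2 * t + a)]

theorem node_condition_of_coeff_relations {x y z r a b : R}
    (h₂ : r * a - 3 = -r * (x + y + z))
    (h₁ : r * b - 2 * a = r * (x * y + x * z + y * z))
    (h₀ : b = r * (x * y * z)) (hdisc : a ^ 2 - 4 * b < 0) :
    0 < x * y * (z ^ 2 - (x + y) * z + 3 * (x * y)) := by
  have hN : 0 < z ^ 2 + a * z + b := monic_quadratic_pos_of_discrim_neg hdisc z
  have hb : 0 < r * z * (x * y) := by
    linarith [monic_quadratic_pos_of_discrim_neg hdisc 0]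
  have hQ : 0 < r * z * (z ^ 2 - (x + y) * z + 3 * (x * y)) := by
    refine pos_of_mul_pos_right ?_ hN.le
    rw [sum_sq_eq_of_coeff_relations h₂ h₁ h₀]
    positivity
  refine pos_of_mul_pos_right ?_ (sq_nonneg (r * z))
  linear_combination mul_pos hb hQ

theorem nullvector_implies_condition_and_root_general {x y z r a b : R}
    (hxy : x ≠ y) (hxz : x ≠ z) (hyz : y ≠ z)
    (hnull : nodeMatrix ![x, y, z] r *ᵥ ![a, b, 1] = 0) (hdisc : a ^ 2 - 4 * b < 0) :
    0 < x * y * (z ^ 2 - (x + y) * z + 3 * (x * y)) ∧ nodeCubic x y z r = 0 := by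
  obtain ⟨h₂, h₁, h₀⟩ := coeff_relations_of_nodeMatrix_mulVec_eq_zero hxy hxz hyz hnull
  exact ⟨node_condition_of_coeff_relations h₂ h₁ h₀ hdisc,
    nodeCubic_eq_zero_of_coeff_relations h₂ h₁ h₀⟩

end LinearOrder

/-- **From a nullvector of `A(r)` with negative discriminant to a root of `P`.**
If `A(r)·(a, b, 1)ᵀ = 0` and `a² − 4b < 0` for some triplet `(r, a, b)`, then
condition (C) holds and `P(r) = 0`. -/
theorem nullvector_implies_condition_and_root
    (Δ₁ Δ₂ : ℝ) (h21 : 1 < Δ₂) (h12 : Δ₂ < Δ₁)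
    (P : ℝ → ℝ)
    (hP : P = fun x => Δ₁ * Δ₂ * x ^ 3 - (Δ₁ * Δ₂ + Δ₁ + Δ₂) * x ^ 2
      + 2 * (Δ₁ + Δ₂ + 1) * x - 6)
    (A : ℝ → Matrix (Fin 3) (Fin 3) ℝ)
    (hA : A = fun ρ =>
      !![ρ - 2, ρ - 1, ρ - 3;
         ρ * Δ₁ ^ 2 - 2 * Δ₁, ρ * Δ₁ - 1, ρ * Δ₁ ^ 3 - 3 * Δ₁ ^ 2;
         ρ * Δ₂ ^ 2 - 2 * Δ₂, ρ * Δ₂ - 1, ρ * Δ₂ ^ 3 - 3 * Δ₂ ^ 2])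
    (r a b : ℝ)
    (hnull : (A r).mulVec ![a, b, 1] = 0)
    (hdisc : a ^ 2 - 4 * b < 0) :
    (Δ₂ ^ 2 - (Δ₁ + 1) * Δ₂ + 3 * Δ₁ > 0 ∨ Δ₁ < 5 + 2 * Real.sqrt 6) ∧ P r = 0 := by
  subst hP hA
  have hnode : nodeMatrix ![1, Δ₁, Δ₂] r *ᵥ ![a, b, 1] = 0 := by
    rw [nodeMatrix_one]
    exact hnull
  obtain ⟨hC, hroot⟩ := nullvector_implies_condition_and_root_general
    (h21.trans h12).ne h21.ne h12.ne' hnode hdisc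
  refine ⟨Or.inl ?_, (nodeCubic_one Δ₁ Δ₂ r).symm.trans hroot⟩
  linarith [pos_of_mul_pos_right hC (by linarith)]
end

section
/- Fix an integer k ≥ 3 and a real number A > 0. Let τ₁, …, τ_{k−1} be nonnegative reals with τ₁ + ⋯ + τ_{k−1} > 0, and define recursively for n ≥ k: τ_n = S_n / (A + S_n), where S_n = Σ_{j=1}^{k−1} τ_{n−j}. Then τ_n converges as n → ∞; its limit equals 0 if A ≥ k−1, and equals (k−1−A)/(k−1) if 0 < A < k−1. -/
/-!
The recursion is `τ n = φ (S n)` with `φ x = x / (A + x)` increasing. Hence, as soon as `m = k - 1`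
consecutive terms lie in `[a, b]`, the next term lies in `[f a, f b]`, where
`f x = φ (m x) = x / (r + x)` and `r = A / m`. Starting from an interval `[a, b]` that contains all
terms, `τ` is thus eventually trapped in `[f^i a, f^i b]` for every `i`, and it suffices to follow
the one-dimensional map `f`. Since `f` is a Möbius map, its iterates are explicit:
`f^i x = x / (r ^ i + x (1 + r + ⋯ + r ^ (i - 1)))`. For `x > 0` they tend to `1 - r` if `r < 1`
and to `0` otherwise.
-/

open Filter Finset Topology

section WindowedSequences

theorem mem_of_window_mem {α : Type*} {x : ℕ → α} {s : ℕ → Set α} {m N : ℕ}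
    (hbase : ∀ n, N ≤ n → x n ∈ s 0)
    (hstep : ∀ i n, N + m ≤ n → (∀ j ∈ Icc 1 m, x (n - j) ∈ s i) → x n ∈ s (i + 1)) :
    ∀ i n, N + i * m ≤ n → x n ∈ s i := by
  intro i
  induction i with
  | zero => exact fun n hn => hbase n (by lia)
  | succ i ih =>
    intro n hn
    rw [add_one_mul] at hn
    refine hstep i n (by lia) fun j hj => ih _ ?_
    rw [mem_Icc] at hj
    lia

theorem tendsto_of_eventually_mem_Icc {α β ι : Type*} [LinearOrder β] [TopologicalSpace β]
    [OrderTopology β] {F : Filter α} {G : Filter ι} [G.NeBot] {x : α → β} {a b : ι → β} {l : β}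
    (ha : Tendsto a G (𝓝 l)) (hb : Tendsto b G (𝓝 l))
    (hx : ∀ i, ∀ᶠ t in F, x t ∈ Set.Icc (a i) (b i)) : Tendsto x F (𝓝 l) := by
  refine tendsto_order.2 ⟨fun u hu => ?_, fun u hu => ?_⟩
  · obtain ⟨i, hi⟩ := (ha.eventually_const_lt hu).exists
    exact (hx i).mono fun t ht => hi.trans_le ht.1
  · obtain ⟨i, hi⟩ := (hb.eventually_lt_const hu).exists
    exact (hx i).mono fun t ht => ht.2.trans_lt hi

/-- The sum of the `m` terms of `τ` preceding `τ n`, written `S n` in the paper. The index `n - j`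
is a truncated subtraction, so this has its intended meaning for `m ≤ n`. -/
def windowSum {M : Type*} [AddCommMonoid M] (m : ℕ) (τ : ℕ → M) (n : ℕ) : M :=
  ∑ j ∈ Icc 1 m, τ (n - j)

theorem windowSum_add_one_self {M : Type*} [AddCommMonoid M] (m : ℕ) (τ : ℕ → M) :
    windowSum m τ (m + 1) = ∑ j ∈ Icc 1 m, τ j := by
  refine sum_nbij' (m + 1 - ·) (m + 1 - ·) ?_ ?_ ?_ ?_ fun _ _ => rfl
  all_goals
    intro j hj
    simp only [mem_Icc] at hj ⊢
    lia

theorem windowSum_le {M : Type*} [AddCommMonoid M] [PartialOrder M] [IsOrderedAddMonoid M]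
    {m n : ℕ} {τ : ℕ → M} {b : M} (h : ∀ j ∈ Icc 1 m, τ (n - j) ≤ b) :
    windowSum m τ n ≤ m • b := by
  simpa [windowSum] using sum_le_card_nsmul _ _ b h

theorem le_windowSum {M : Type*} [AddCommMonoid M] [PartialOrder M] [IsOrderedAddMonoid M]
    {m n : ℕ} {τ : ℕ → M} {a : M} (h : ∀ j ∈ Icc 1 m, a ≤ τ (n - j)) :
    m • a ≤ windowSum m τ n := by
  simpa [windowSum] using card_nsmul_le_sum _ _ a h

end WindowedSequences

/-- The Beverton–Holt (or Michaelis–Menten) map `x ↦ x / (A + x)`, used with the constant `A` of the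
recursion and with `A / m` for the one-dimensional comparison map. -/
def saturation {K : Type*} [Field K] (A x : K) : K :=
  x / (A + x)

section Saturation

variable {K : Type*} [Field K]

theorem saturation_mul_left {c : K} (hc : c ≠ 0) (A x : K) :
    saturation A (c * x) = saturation (A / c) x := by
  unfold saturation
  field_simp

variable [LinearOrder K] [IsStrictOrderedRing K] {A r x y : K}

theorem saturation_nonneg (hA : 0 ≤ A) (hx : 0 ≤ x) : 0 ≤ saturation A x :=
  div_nonneg hx (add_nonneg hA hx)

theorem saturation_pos (hA : 0 ≤ A) (hx : 0 < x) : 0 < saturation A x :=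
  div_pos hx (add_pos_of_nonneg_of_pos hA hx)

theorem saturation_le_one (hA : 0 ≤ A) (hx : 0 ≤ x) : saturation A x ≤ 1 :=
  div_le_one_of_le₀ (le_add_of_nonneg_left hA) (add_nonneg hA hx)

theorem saturation_le_saturation (hA : 0 < A) (hx : 0 ≤ x) (hxy : x ≤ y) :
    saturation A x ≤ saturation A y := by
  have hy : 0 ≤ y := hx.trans hxy
  unfold saturation
  rw [div_le_div_iff₀ (by positivity) (by positivity)]
  linarith [mul_le_mul_of_nonneg_left hxy hA.le]

theorem le_saturation (hr : 0 ≤ r) (hx : 0 < x) (hxr : x ≤ 1 - r) : x ≤ saturation r x :=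
  le_div_self hx.le (by positivity) (by linarith)

theorem iterate_saturation_nonneg (hr : 0 ≤ r) (hx : 0 ≤ x) (i : ℕ) :
    0 ≤ (saturation r)^[i] x :=
  Function.Iterate.rec (0 ≤ ·) hx (fun _ => saturation_nonneg hr) i

theorem iterate_saturation (hr : 0 < r) (hx : 0 ≤ x) (i : ℕ) :
    (saturation r)^[i] x = x / (r ^ i + x * ∑ j ∈ range i, r ^ j) := by
  induction i with
  | zero => simp
  | succ i ih =>
    have hden : 0 < r ^ i + x * ∑ j ∈ range i, r ^ j := by positivity
    rw [Function.iterate_succ_apply', ih, geom_sum_succ, saturation]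
    field_simp
    ring

end Saturation

section SaturationLimits

theorem tendsto_geom_sum_atTop_of_one_le {R : Type*} [Semiring R] [PartialOrder R]
    [IsOrderedRing R] [Archimedean R] {r : R} (hr : 1 ≤ r) :
    Tendsto (fun i => ∑ j ∈ range i, r ^ j) atTop atTop := by
  refine tendsto_atTop_mono (fun i => ?_) tendsto_natCast_atTop_atTop
  simpa using card_nsmul_le_sum (range i) (r ^ ·) 1 fun j _ => one_le_pow₀ hr

variable {r x : ℝ}

theorem tendsto_iterate_saturation_of_lt_one (hr : 0 < r) (hr1 : r < 1) (hx : 0 < x) :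
    Tendsto (fun i => (saturation r)^[i] x) atTop (𝓝 (1 - r)) := by
  simp only [iterate_saturation hr hx.le]
  have hpow : Tendsto (fun i => r ^ i) atTop (𝓝 0) :=
    tendsto_pow_atTop_nhds_zero_of_lt_one hr.le hr1
  have hgeom : Tendsto (fun i => ∑ j ∈ range i, r ^ j) atTop (𝓝 (1 - r)⁻¹) :=
    (hasSum_geometric_of_lt_one hr.le hr1).tendsto_sum_nat
  have hr1' : 0 < 1 - r := sub_pos.2 hr1
  have hlimit : x / (0 + x * (1 - r)⁻¹) = 1 - r := by
    field_simp
    ring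
  exact hlimit ▸ tendsto_const_nhds.div (hpow.add (hgeom.const_mul x)) (by positivity)

theorem tendsto_iterate_saturation_of_one_le (hr : 1 ≤ r) (hx : 0 ≤ x) :
    Tendsto (fun i => (saturation r)^[i] x) atTop (𝓝 0) := by
  have hr0 : 0 < r := zero_lt_one.trans_le hr
  simp only [iterate_saturation hr0 hx]
  obtain rfl | hx := hx.eq_or_lt
  · simp
  · refine Tendsto.const_div_atTop ?_ x
    exact tendsto_atTop_mono (fun i => le_add_of_nonneg_left (by positivity))
      ((tendsto_geom_sum_atTop_of_one_le hr).const_mul_atTop hx)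

end SaturationLimits

/-- The recursion `τ n = S n / (A + S n)`, where `S n` is the sum of the `m` preceding terms and the
starting values `τ 1, …, τ m` are arbitrary; in the paper's notation `m = k - 1`. -/
def IsSaturatedSumRecursion {K : Type*} [Field K] (A : K) (m : ℕ) (τ : ℕ → K) : Prop :=
  ∀ n, m < n → τ n = saturation A (windowSum m τ n)

namespace IsSaturatedSumRecursion

section OrderedField

variable {K : Type*} [Field K] [LinearOrder K] [IsStrictOrderedRing K]
  {A a b : K} {m n : ℕ} {τ : ℕ → K}

theorem nonneg (h : IsSaturatedSumRecursion A m τ) (hA : 0 ≤ A) (hinit : ∀ j ∈ Icc 1 m, 0 ≤ τ j)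
    (hn : 1 ≤ n) : 0 ≤ τ n := by
  induction n using Nat.strong_induction_on with
  | _ n ih =>
    by_cases hnm : n ≤ m
    · exact hinit n (mem_Icc.2 ⟨hn, hnm⟩)
    · rw [h n (by lia)]
      refine saturation_nonneg hA (sum_nonneg fun j hj => ?_)
      rw [mem_Icc] at hj
      exact ih _ (by lia) (by lia)

theorem windowSum_nonneg (h : IsSaturatedSumRecursion A m τ) (hA : 0 ≤ A)
    (hinit : ∀ j ∈ Icc 1 m, 0 ≤ τ j) (hn : m < n) : 0 ≤ windowSum m τ n := by
  refine sum_nonneg fun j hj => h.nonneg hA hinit ?_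
  rw [mem_Icc] at hj
  lia

theorem le_one (h : IsSaturatedSumRecursion A m τ) (hA : 0 ≤ A)
    (hinit : ∀ j ∈ Icc 1 m, 0 ≤ τ j) (hn : m < n) : τ n ≤ 1 :=
  h n hn ▸ saturation_le_one hA (h.windowSum_nonneg hA hinit hn)

theorem pos (h : IsSaturatedSumRecursion A m τ) (hA : 0 ≤ A) (hinit : ∀ j ∈ Icc 1 m, 0 ≤ τ j)
    (hsum : 0 < ∑ j ∈ Icc 1 m, τ j) (hn : m < n) : 0 < τ n := by
  have hm : 1 ≤ m := nonempty_Icc.1 (nonempty_of_sum_ne_zero hsum.ne')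
  induction n, Nat.succ_le_of_lt hn using Nat.le_induction with
  | base =>
    rw [h _ hn, windowSum_add_one_self]
    exact saturation_pos hA hsum
  | succ n hmn ih =>
    rw [h _ hn]
    refine saturation_pos hA (sum_pos' (fun j hj => h.nonneg hA hinit ?_) ⟨1, ?_, ih hmn⟩)
    · rw [mem_Icc] at hj
      lia
    · exact mem_Icc.2 ⟨le_rfl, hm⟩

theorem mem_Icc_saturation (h : IsSaturatedSumRecursion A m τ) (hA : 0 < A) (hm : 0 < m)
    (ha : 0 ≤ a) (hn : m < n) (hwindow : ∀ j ∈ Icc 1 m, τ (n - j) ∈ Set.Icc a b) :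
    τ n ∈ Set.Icc (saturation (A / m) a) (saturation (A / m) b) := by
  have hm0 : (m : K) ≠ 0 := Nat.cast_ne_zero.2 hm.ne'
  have hlower : m * a ≤ windowSum m τ n :=
    nsmul_eq_mul m a ▸ le_windowSum fun j hj => (hwindow j hj).1
  have hupper : windowSum m τ n ≤ m * b :=
    nsmul_eq_mul m b ▸ windowSum_le fun j hj => (hwindow j hj).2
  have hma : 0 ≤ m * a := mul_nonneg m.cast_nonneg ha
  rw [h n hn, ← saturation_mul_left hm0, ← saturation_mul_left hm0]
  exact ⟨saturation_le_saturation hA hma hlower,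
    saturation_le_saturation hA (hma.trans hlower) hupper⟩

theorem mem_Icc_iterate_saturation (h : IsSaturatedSumRecursion A m τ) (hA : 0 < A) (hm : 0 < m)
    (ha : 0 ≤ a) (hτ : ∀ n, m < n → τ n ∈ Set.Icc a b) (i : ℕ) (hn : m + 1 + i * m ≤ n) :
    τ n ∈ Set.Icc ((saturation (A / m))^[i] a) ((saturation (A / m))^[i] b) := by
  refine mem_of_window_mem
    (s := fun i => Set.Icc ((saturation (A / m))^[i] a) ((saturation (A / m))^[i] b))
    hτ (fun i n hn hwindow => ?_) i n hn
  simp only [Function.iterate_succ_apply']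
  exact h.mem_Icc_saturation hA hm
    (iterate_saturation_nonneg (div_nonneg hA.le m.cast_nonneg) ha i) (by lia) hwindow

/-- A lower bound `a` on `m` consecutive terms persists as soon as `a` does not exceed the
equilibrium `1 - A / m`, for then the comparison map moves `a` upwards. -/
theorem exists_pos_lower_bound (h : IsSaturatedSumRecursion A m τ) (hA : 0 < A) (hAm : A < m)
    (hpos : ∀ n, m < n → 0 < τ n) : ∃ a, 0 < a ∧ ∀ n, m < n → a ≤ τ n := by
  have hm : (0 : K) < m := hA.trans hAm
  have hm1 : 1 ≤ m := Nat.cast_pos.1 hm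
  obtain ⟨p, hp, hmin⟩ := exists_min_image (Icc (m + 1) (m + m)) τ (nonempty_Icc.2 (by lia))
  have hp_pos : 0 < τ p := hpos p (mem_Icc.1 hp).1
  have hequil : 0 < 1 - A / m := sub_pos.2 ((div_lt_one hm).2 hAm)
  obtain ⟨a, ha, hap, har⟩ : ∃ a, 0 < a ∧ a ≤ τ p ∧ a ≤ 1 - A / m :=
    ⟨min (τ p) (1 - A / m), lt_min hp_pos hequil, min_le_left _ _, min_le_right _ _⟩
  refine ⟨a, ha, fun n => ?_⟩
  induction n using Nat.strong_induction_on with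
  | _ n ih =>
    intro hn
    by_cases hblock : n ≤ m + m
    · exact hap.trans (hmin n (mem_Icc.2 ⟨hn, hblock⟩))
    · have hwindow : m * a ≤ windowSum m τ n := nsmul_eq_mul m a ▸ le_windowSum fun j hj => by
        rw [mem_Icc] at hj
        exact ih _ (by lia) (by lia)
      calc a ≤ saturation (A / m) a := le_saturation (div_nonneg hA.le hm.le) ha har
        _ = saturation A (m * a) := (saturation_mul_left hm.ne' A a).symm
        _ ≤ saturation A (windowSum m τ n) := saturation_le_saturation hA (by positivity) hwindow
        _ = τ n := (h n hn).symm

end OrderedField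

section Real

variable {A a b l : ℝ} {m : ℕ} {τ : ℕ → ℝ}

theorem tendsto_of_tendsto_iterate_saturation (h : IsSaturatedSumRecursion A m τ) (hA : 0 < A)
    (hm : 0 < m) (ha : 0 ≤ a) (hτ : ∀ n, m < n → τ n ∈ Set.Icc a b)
    (hla : Tendsto (fun i => (saturation (A / m))^[i] a) atTop (𝓝 l))
    (hlb : Tendsto (fun i => (saturation (A / m))^[i] b) atTop (𝓝 l)) :
    Tendsto τ atTop (𝓝 l) :=
  tendsto_of_eventually_mem_Icc hla hlb fun i => (eventually_ge_atTop (m + 1 + i * m)).mono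
    fun _ => h.mem_Icc_iterate_saturation hA hm ha hτ i

theorem tendsto_zero (h : IsSaturatedSumRecursion A m τ) (hm : 0 < m) (hmA : m ≤ A)
    (hinit : ∀ j ∈ Icc 1 m, 0 ≤ τ j) : Tendsto τ atTop (𝓝 0) := by
  have hm' : (0 : ℝ) < m := Nat.cast_pos.2 hm
  have hA : 0 < A := hm'.trans_le hmA
  have hr : 1 ≤ A / m := (one_le_div hm').2 hmA
  exact h.tendsto_of_tendsto_iterate_saturation hA hm le_rfl
    (fun n hn => ⟨h.nonneg hA.le hinit (by lia), h.le_one hA.le hinit hn⟩)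
    (tendsto_iterate_saturation_of_one_le hr le_rfl)
    (tendsto_iterate_saturation_of_one_le hr zero_le_one)

theorem tendsto_one_sub_div (h : IsSaturatedSumRecursion A m τ) (hA : 0 < A) (hAm : A < m)
    (hinit : ∀ j ∈ Icc 1 m, 0 ≤ τ j) (hsum : 0 < ∑ j ∈ Icc 1 m, τ j) :
    Tendsto τ atTop (𝓝 (1 - A / m)) := by
  have hm : (0 : ℝ) < m := hA.trans hAm
  have hr : 0 < A / m := div_pos hA hm
  have hr1 : A / m < 1 := (div_lt_one hm).2 hAm
  obtain ⟨a, ha, hlower⟩ := h.exists_pos_lower_bound hA hAm fun n => h.pos hA.le hinit hsum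
  exact h.tendsto_of_tendsto_iterate_saturation hA (Nat.cast_pos.1 hm) ha.le
    (fun n hn => ⟨hlower n hn, h.le_one hA.le hinit hn⟩)
    (tendsto_iterate_saturation_of_lt_one hr hr1 ha)
    (tendsto_iterate_saturation_of_lt_one hr hr1 zero_lt_one)

end Real

end IsSaturatedSumRecursion

/-- **Global attractivity of the rational recursion.**  For `k ≥ 3`, `A > 0`,
nonnegative starting values `τ₁, …, τ_{k−1}` with positive sum, and
`τ_n = S_n / (A + S_n)` with `S_n = Σ_{j=1}^{k−1} τ_{n−j}` for `n ≥ k`, the sequence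
`τ_n` converges: to `0` if `k − 1 ≤ A`, and to `(k−1−A)/(k−1)` if `0 < A < k − 1`. -/
theorem rational_recursion_global_attractivity
    (k : ℕ) (hk : 3 ≤ k) (A : ℝ) (hA : 0 < A)
    (τ : ℕ → ℝ)
    (hτnn : ∀ j, 1 ≤ j → j ≤ k - 1 → 0 ≤ τ j)
    (hτpos : 0 < ∑ j ∈ Finset.Icc 1 (k - 1), τ j)
    (hrec : ∀ n, k ≤ n →
      τ n = (∑ j ∈ Finset.Icc 1 (k - 1), τ (n - j))
        / (A + ∑ j ∈ Finset.Icc 1 (k - 1), τ (n - j))) :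
    Filter.Tendsto τ Filter.atTop
      (nhds (if ((k : ℝ) - 1) ≤ A then 0 else ((k : ℝ) - 1 - A) / ((k : ℝ) - 1))) := by
  obtain ⟨m, rfl⟩ : ∃ m, k = m + 1 := ⟨k - 1, by lia⟩
  simp only [Nat.add_sub_cancel, Nat.cast_add_one, add_sub_cancel_right]
    at hτnn hτpos hrec ⊢
  have hm : 0 < m := by lia
  have hinit : ∀ j ∈ Icc 1 m, 0 ≤ τ j := fun j hj => hτnn j (mem_Icc.1 hj).1 (mem_Icc.1 hj).2
  have h : IsSaturatedSumRecursion A m τ := hrec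
  split_ifs with hmA
  · exact h.tendsto_zero hm hmA hinit
  · rw [sub_div, div_self (Nat.cast_ne_zero.2 hm.ne')]
    exact h.tendsto_one_sub_div hA (not_le.1 hmA) hinit hτpos
end

section
/- Let a ≤ b be real numbers and k ≥ 3 an integer. Let f : [a,b]^{k−1} → [a,b] be continuous and nondecreasing in each of its k−1 arguments, and suppose there is a unique x̄ ∈ [a,b] with f(x̄, x̄, …, x̄) = x̄. Let x₁, …, x_{k−1} ∈ [a,b] and define for n ≥ k: x_n = f(x_{n−1}, x_{n−2}, …, x_{n−(k−1)}). Then x_n → x̄ as n → ∞. -/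
/-!
The iterates of the diagonal map `g t = f (t, …, t)` from `a` increase and those from `b` decrease,
and by continuity both limits are fixed points of `g`, hence equal to `x̄`. Since `f` is monotone,
once all terms of the solution lie in `[l, u]`, all sufficiently late terms lie in `[g l, g u]`.
So for every `j` the solution is eventually trapped in `[gʲ a, gʲ b]`, which shrinks to `x̄`.
-/

open Filter Function Set Topology

section Iterate

variable {α : Type*} {g : α → α} {s : Set α}

lemma monotone_iterate_of_monotoneOn [Preorder α] {x : α} (hg : MonotoneOn g s)
    (hs : MapsTo g s s) (hx : x ∈ s) (hle : x ≤ g x) : Monotone fun n => g^[n] x := by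
  refine monotone_nat_of_le_succ fun n => ?_
  induction n with
  | zero => exact hle
  | succ n ih =>
    simp only [iterate_succ_apply'] at ih ⊢
    exact hg (hs.iterate n hx) (hs (hs.iterate n hx)) ih

lemma isFixedPt_of_tendsto_iterate_of_continuousWithinAt [TopologicalSpace α] [T2Space α]
    {x y : α} (hg : ContinuousWithinAt g s y) (hs : ∀ n, g^[n] x ∈ s)
    (hy : Tendsto (fun n => g^[n] x) atTop (𝓝 y)) : IsFixedPt g y := by
  have hy_within : Tendsto (fun n => g^[n] x) atTop (𝓝[s] y) :=
    tendsto_nhdsWithin_iff.2 ⟨hy, .of_forall hs⟩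
  refine tendsto_nhds_unique (hg.tendsto.comp hy_within) ?_
  simpa only [comp_def, iterate_succ_apply'] using (tendsto_add_atTop_iff_nat 1).2 hy

variable [ConditionallyCompleteLinearOrder α] [TopologicalSpace α] [OrderTopology α] {a b c : α}

lemma tendsto_iterate_left_of_forall_isFixedPt_eq (hab : a ≤ b) (hg : MonotoneOn g (Icc a b))
    (hcont : ContinuousOn g (Icc a b)) (ha : a ≤ g a) (hb : g b ≤ b)
    (hc : ∀ y ∈ Icc a b, IsFixedPt g y → y = c) : Tendsto (fun n => g^[n] a) atTop (𝓝 c) := by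
  have hmaps : MapsTo g (Icc a b) (Icc a b) := hg.mapsTo_Icc.mono_right (Icc_subset_Icc ha hb)
  have hmem (n : ℕ) : g^[n] a ∈ Icc a b := hmaps.iterate n (left_mem_Icc.2 hab)
  have hlim : Tendsto (fun n => g^[n] a) atTop (𝓝 (⨆ n, g^[n] a)) :=
    tendsto_atTop_ciSup (monotone_iterate_of_monotoneOn hg hmaps (left_mem_Icc.2 hab) ha)
      ⟨b, forall_mem_range.2 fun n => (hmem n).2⟩
  have hlim_mem := isClosed_Icc.mem_of_tendsto hlim (.of_forall hmem)
  rwa [hc _ hlim_mem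
    (isFixedPt_of_tendsto_iterate_of_continuousWithinAt (hcont _ hlim_mem) hmem hlim)] at hlim

lemma tendsto_iterate_right_of_forall_isFixedPt_eq (hab : a ≤ b) (hg : MonotoneOn g (Icc a b))
    (hcont : ContinuousOn g (Icc a b)) (ha : a ≤ g a) (hb : g b ≤ b)
    (hc : ∀ y ∈ Icc a b, IsFixedPt g y → y = c) : Tendsto (fun n => g^[n] b) atTop (𝓝 c) := by
  have hIcc : Icc (OrderDual.toDual b) (OrderDual.toDual a) = OrderDual.ofDual ⁻¹' Icc a b :=
    Icc_toDual
  exact tendsto_iterate_left_of_forall_isFixedPt_eq (α := αᵒᵈ) (a := OrderDual.toDual b)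
    (b := OrderDual.toDual a) hab (hIcc ▸ hg.dual) (hIcc ▸ hcont) hb ha (hIcc ▸ hc)

end Iterate

lemma tendsto_of_forall_eventually_mem_Icc {α β γ : Type*} [Preorder α] [TopologicalSpace α]
    [OrderTopology α] {p : Filter γ} [p.NeBot] {l : Filter β} {u v : γ → α} {x : β → α} {c : α}
    (hu : Tendsto u p (𝓝 c)) (hv : Tendsto v p (𝓝 c))
    (hx : ∀ j, ∀ᶠ t in l, x t ∈ Icc (u j) (v j)) : Tendsto x l (𝓝 c) := by
  refine tendsto_order.2 ⟨fun d hd => ?_, fun d hd => ?_⟩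
  · obtain ⟨j, hj⟩ := ((tendsto_order.1 hu).1 d hd).exists
    exact (hx j).mono fun t ht => hj.trans_le ht.1
  · obtain ⟨j, hj⟩ := ((tendsto_order.1 hv).2 d hd).exists
    exact (hx j).mono fun t ht => ht.2.trans_lt hj

section Recurrence

variable {α β ι : Type*} {f : (ι → α) → α} {s : Set α} {l : Filter β} {τ : ι → β → β} {x : β → α}

lemma eventually_mem_Icc_map_const [Preorder α] [Finite ι] {u v : α}
    (hf : MonotoneOn f (univ.pi fun _ => s)) (hτ : ∀ i, Tendsto (τ i) l l)
    (hs : ∀ᶠ t in l, x t ∈ s) (hrec : ∀ᶠ t in l, x t = f fun i => x (τ i t))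
    (hu : u ∈ s) (hv : v ∈ s) (hx : ∀ᶠ t in l, x t ∈ Icc u v) :
    ∀ᶠ t in l, x t ∈ Icc (f (const ι u)) (f (const ι v)) := by
  have hdelay : ∀ᶠ t in l, ∀ i, x (τ i t) ∈ s ∧ x (τ i t) ∈ Icc u v :=
    eventually_all.2 fun i => (hτ i).eventually (hs.and hx)
  filter_upwards [hrec, hdelay] with t ht hmem
  rw [ht]
  exact ⟨hf (fun _ _ => hu) (fun i _ => (hmem i).1) fun i => (hmem i).2.1,
    hf (fun i _ => (hmem i).1) (fun _ _ => hv) fun i => (hmem i).2.2⟩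

lemma eventually_mem_Icc_iterate [Preorder α] [Finite ι] {a b : α}
    (hf : MonotoneOn f (univ.pi fun _ => Icc a b)) (hτ : ∀ i, Tendsto (τ i) l l)
    (hx : ∀ᶠ t in l, x t ∈ Icc a b) (hrec : ∀ᶠ t in l, x t = f fun i => x (τ i t))
    (hab : a ≤ b) (hmaps : MapsTo (f ∘ const ι) (Icc a b) (Icc a b)) (j : ℕ) :
    ∀ᶠ t in l, x t ∈ Icc ((f ∘ const ι)^[j] a) ((f ∘ const ι)^[j] b) := by
  induction j with
  | zero => exact hx
  | succ j ih =>
    simp only [iterate_succ_apply']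
    exact eventually_mem_Icc_map_const hf hτ hx hrec
      (hmaps.iterate j (left_mem_Icc.2 hab)) (hmaps.iterate j (right_mem_Icc.2 hab)) ih

end Recurrence

lemma mem_of_recurrence_of_mapsTo {α : Type*} {s : Set α} {m : ℕ} {f : (Fin m → α) → α}
    {x : ℕ → α} (hf : MapsTo f (univ.pi fun _ => s) s) (hinit : ∀ n, 1 ≤ n → n ≤ m → x n ∈ s)
    (hrec : ∀ n, m < n → x n = f fun i => x (n - 1 - i)) {n : ℕ} (hn : 1 ≤ n) : x n ∈ s := by
  induction n using Nat.strong_induction_on with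
  | _ n ih =>
    rcases le_or_gt n m with hnm | hmn
    · exact hinit n hn hnm
    · rw [hrec n hmn]
      exact hf fun i _ => ih _ (by omega) (by omega)

theorem monotone_difference_equation_convergence_general {α β ι : Type*}
    [ConditionallyCompleteLinearOrder α] [TopologicalSpace α] [OrderTopology α] [Finite ι]
    {a b c : α} (hab : a ≤ b) {f : (ι → α) → α} (hf : MonotoneOn f (univ.pi fun _ => Icc a b))
    (hcont : ContinuousOn (f ∘ const ι) (Icc a b))
    (ha : a ≤ f (const ι a)) (hb : f (const ι b) ≤ b)
    (hc : ∀ y ∈ Icc a b, f (const ι y) = y → y = c)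
    {l : Filter β} {τ : ι → β → β} (hτ : ∀ i, Tendsto (τ i) l l) {x : β → α}
    (hx : ∀ᶠ t in l, x t ∈ Icc a b) (hrec : ∀ᶠ t in l, x t = f fun i => x (τ i t)) :
    Tendsto x l (𝓝 c) := by
  have hdiag : MonotoneOn (f ∘ const ι) (Icc a b) := fun _ hy _ hz hyz =>
    hf (fun _ _ => hy) (fun _ _ => hz) fun _ => hyz
  have hmaps : MapsTo (f ∘ const ι) (Icc a b) (Icc a b) :=
    hdiag.mapsTo_Icc.mono_right (Icc_subset_Icc ha hb)
  exact tendsto_of_forall_eventually_mem_Icc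
    (tendsto_iterate_left_of_forall_isFixedPt_eq hab hdiag hcont ha hb hc)
    (tendsto_iterate_right_of_forall_isFixedPt_eq hab hdiag hcont ha hb hc)
    (eventually_mem_Icc_iterate hf hτ hx hrec hab hmaps)

/-- **Convergence for monotone maps of higher-order difference equations
(Theorem A.0.1 of Kulenović–Ladas).**  Let `f : [a,b]^{k−1} → [a,b]` be continuous and
nondecreasing in each argument, with a unique fixed point `x̄` of
`x ↦ f(x, …, x)` in `[a,b]`.  Then every solution of
`x_n = f(x_{n−1}, …, x_{n−(k−1)})` with starting values in `[a,b]` converges to `x̄`. -/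
theorem monotone_difference_equation_convergence
    (a b : ℝ) (hab : a ≤ b) (k : ℕ) (hk : 3 ≤ k)
    (f : (Fin (k - 1) → ℝ) → ℝ)
    (hmap : ∀ y : Fin (k - 1) → ℝ, (∀ i, y i ∈ Set.Icc a b) → f y ∈ Set.Icc a b)
    (hcont : ContinuousOn f (Set.univ.pi fun _ : Fin (k - 1) => Set.Icc a b))
    (hmono : ∀ y z : Fin (k - 1) → ℝ,
      (∀ i, y i ∈ Set.Icc a b) → (∀ i, z i ∈ Set.Icc a b) →
      (∀ i, y i ≤ z i) → f y ≤ f z)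
    (xbar : ℝ) (hxbar : xbar ∈ Set.Icc a b)
    (hfix : f (fun _ => xbar) = xbar)
    (huniq : ∀ y ∈ Set.Icc a b, f (fun _ => y) = y → y = xbar)
    (x : ℕ → ℝ)
    (hx0 : ∀ j, 1 ≤ j → j ≤ k - 1 → x j ∈ Set.Icc a b)
    (hrec : ∀ n, k ≤ n → x n = f (fun i => x (n - 1 - (i : ℕ)))) :
    Filter.Tendsto x Filter.atTop (nhds xbar) := by
  have hmaps : MapsTo f (univ.pi fun _ => Icc a b) (Icc a b) := fun y hy =>
    hmap y fun i => hy i trivial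
  have hx (n : ℕ) (hn : 1 ≤ n) : x n ∈ Icc a b :=
    mem_of_recurrence_of_mapsTo hmaps hx0 (fun n hn => hrec n (by omega)) hn
  exact monotone_difference_equation_convergence_general hab
    (fun y hy z hz => hmono y z (fun i => hy i trivial) fun i => hz i trivial)
    (hcont.comp (by fun_prop) fun _ ht _ _ => ht)
    (hmap _ fun _ => left_mem_Icc.2 hab).1 (hmap _ fun _ => right_mem_Icc.2 hab).2 huniq
    (fun i => (tendsto_sub_atTop_nat i).comp (tendsto_sub_atTop_nat 1))
    (eventually_atTop.2 ⟨1, hx⟩) (eventually_atTop.2 ⟨k, hrec⟩)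
end
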